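/- Let G be a connected claw-free graph with maximum degree Δ(G) = 3 and minimum degree at least 2 that contains no A_i for any i of the form i = 3j+1 (j a positive integer). If the number of vertices of degree 3 in G is not equal to 4, then G has a dynamic 3-coloring. -/

import Mathlib

open SimpleGraph

/-- A dynamic `k`-coloring of `G`: a proper vertex coloring such that every vertex
with at least two neighbors sees at least two distinct colors among its neighbors. -/
def IsDynamicColoring {V : Type*} (G : SimpleGraph V) (k : ℕ) (c : V → Fin k) : Prop :=
  (∀ ⦃u v : V⦄, G.Adj u v → c u ≠ c v) ∧
  ∀ v : V, 2 ≤ (G.neighborSet v).ncard →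
    ∃ u w : V, G.Adj v u ∧ G.Adj v w ∧ c u ≠ c w

/-- The dynamic chromatic number: the least `k` admitting a dynamic `k`-coloring. -/
noncomputable def dynamicChromaticNumber {V : Type*} (G : SimpleGraph V) : ℕ :=
  sInf {k : ℕ | ∃ c : V → Fin k, IsDynamicColoring G k c}

/-- `G` is claw-free: no induced subgraph isomorphic to `K_{1,3}`. -/
def ClawFree {V : Type*} (G : SimpleGraph V) : Prop :=
  ¬ ∃ v a b c : V, a ≠ b ∧ a ≠ c ∧ b ≠ c ∧
    G.Adj v a ∧ G.Adj v b ∧ G.Adj v c ∧ ¬ G.Adj a b ∧ ¬ G.Adj a c ∧ ¬ G.Adj b c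

/-- `G` contains an `A_i`: a path on `i` vertices whose `i - 2` internal vertices have
degree 2 in `G` and whose two end-vertices have degree 3 in `G`. -/
def HasAPath {V : Type*} (G : SimpleGraph V) (i : ℕ) : Prop :=
  ∃ v : ℕ → V,
    (∀ a b : ℕ, a < i → b < i → v a = v b → a = b) ∧
    (∀ a : ℕ, a + 1 < i → G.Adj (v a) (v (a + 1))) ∧
    (∀ a : ℕ, 0 < a → a + 1 < i → (G.neighborSet (v a)).ncard = 2) ∧
    (G.neighborSet (v 0)).ncard = 3 ∧
    (G.neighborSet (v (i - 1))).ncard = 3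

/-!
Joining the ends of the *threads*, the paths whose interior vertices have degree two, gives a graph
of maximum degree at most three on the vertices of degree three. As `G` is connected, a `K₄` in this
graph would contain all vertices of degree three, so there would be exactly four of them. Hence the
thread graph has a proper 3-coloring by Brooks' theorem.

This coloring extends along every thread. A 3-coloring of a path in which any three consecutive
vertices get distinct colors has period three, so on a path of length `k` it exists with prescribed
colors at the ends if and only if these colors agree precisely when `3 ∣ k`. An open thread has ends
of different colors, and it is an `A_{k+1}`, so `3 ∤ k`; a closed thread has length three because
`G` is claw-free. Vertices of degree two then see two colors, and so do vertices of degree three,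
since two of their neighbours are adjacent.

The proof of Brooks' theorem goes back to Zając. A minimal uncolorable set `S` of vertices is a
component. The end of a maximal path extended from an induced path `a - b - c` has all its
neighbours on a cycle `C` contained in the path. If `C` is not all of `S`, color the rest, give a
vertex `x` of `C` without neighbours outside `C` the color of an outside neighbour of the next
vertex `y` of `C`, and color greedily around `C` towards `y`. Otherwise the path spans `S`; color
`a` and `c` alike, and color greedily towards `b`, which has a third neighbour on the path.
-/

/-! ### Brooks' theorem -/

section Lists

variable {α : Type*} {P : α → Prop}

theorem exists_eq_append_cons_of_last_pos {l : List α} (h : ∃ x ∈ l, P x) :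
    ∃ l₁ x l₂, l = l₁ ++ x :: l₂ ∧ P x ∧ ∀ y ∈ l₂, ¬ P y := by
  induction l with
  | nil => simp at h
  | cons a l ih =>
    by_cases hl : ∃ x ∈ l, P x
    · obtain ⟨l₁, x, l₂, rfl, hx, hl₂⟩ := ih hl
      exact ⟨a :: l₁, x, l₂, rfl, hx, hl₂⟩
    · exact ⟨[], a, l, rfl, by simpa [hl] using h, by simpa using hl⟩

theorem exists_cons_eq_append_cons_cons {a : α} {l : List α} (ha : ¬ P a) (h : ∃ x ∈ l, P x) :
    ∃ l₁ x y l₂, a :: l = l₁ ++ x :: y :: l₂ ∧ ¬ P x ∧ P y := by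
  induction l generalizing a with
  | nil => simp at h
  | cons b l ih =>
    by_cases hb : P b
    · exact ⟨[], a, b, l, rfl, ha, hb⟩
    · obtain ⟨l₁, x, y, l₂, hl, hx, hy⟩ := ih hb (by simpa [hb] using h)
      exact ⟨a :: l₁, x, y, l₂, by rw [hl, List.cons_append], hx, hy⟩

end Lists

section Brooks

variable {V α : Type*} {G : SimpleGraph V} {S T : Set V} {f g : V → α}

/-- The restriction of `f` to `S` is a proper coloring of the subgraph of `G` induced on `S`.
The values of `f` outside `S` are irrelevant. -/
def IsColoringOn (G : SimpleGraph V) (S : Set V) (f : V → α) : Prop :=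
  ∀ ⦃u⦄, u ∈ S → ∀ ⦃v⦄, v ∈ S → G.Adj u v → f u ≠ f v

theorem isChain_adj_reverse {l : List V} : l.reverse.IsChain G.Adj ↔ l.IsChain G.Adj := by
  simp only [List.isChain_reverse, G.adj_comm]

namespace IsColoringOn

open scoped Classical in
theorem piecewise_union (hf : IsColoringOn G S f) (hg : IsColoringOn G T g)
    (h : ∀ u ∈ S, ∀ v ∈ T, ¬ G.Adj u v) : IsColoringOn G (S ∪ T) (S.piecewise f g) := by
  intro u hu v hv huv
  by_cases huS : u ∈ S <;> by_cases hvS : v ∈ S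
  · simpa [huS, hvS] using hf huS hvS huv
  · exact absurd huv (h u huS v (hv.resolve_left hvS))
  · exact absurd huv.symm (h v hvS u (hu.resolve_left huS))
  · simpa [huS, hvS] using hg (hu.resolve_left huS) (hv.resolve_left hvS) huv

open scoped Classical in
theorem update_insert (hf : IsColoringOn G S f) {v : V} (hv : v ∉ S) {c : α}
    (hc : ∀ u ∈ S, G.Adj v u → f u ≠ c) :
    IsColoringOn G (insert v S) (Function.update f v c) := by
  have hne : ∀ u ∈ S, u ≠ v := fun u hu h => hv (h ▸ hu)
  rintro u (rfl | hu) w (rfl | hw) huw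
  · exact absurd rfl huw.ne
  · simpa [hne w hw] using (hc w hw huw).symm
  · simpa [hne u hu] using hc u hu huw.symm
  · simpa [hne u hu, hne w hw] using hf hu hw huw

theorem exists_insert [Finite α] (hf : IsColoringOn G S f) {v : V} (hv : v ∉ S)
    (hcard : (f '' (G.neighborSet v ∩ S)).ncard < Nat.card α) :
    ∃ g : V → α, IsColoringOn G (insert v S) g ∧ S.EqOn g f := by
  classical
  obtain ⟨c, hc⟩ : ∃ c, c ∉ f '' (G.neighborSet v ∩ S) := by
    by_contra! h
    rw [Set.eq_univ_of_forall h, Set.ncard_univ] at hcard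
    exact hcard.false
  exact ⟨Function.update f v c, hf.update_insert hv fun u hu huv h => hc ⟨u, ⟨huv, hu⟩, h⟩,
    fun u hu => Function.update_of_ne (ne_of_mem_of_not_mem hu hv) c f⟩

variable [Finite V] [Finite α]

theorem exists_insert_of_adj_notMem (hf : IsColoringOn G S f) {v w : V}
    (hdeg : (G.neighborSet v).ncard ≤ Nat.card α) (hv : v ∉ S) (hvw : G.Adj v w) (hw : w ∉ S) :
    ∃ g : V → α, IsColoringOn G (insert v S) g ∧ S.EqOn g f := by
  refine hf.exists_insert hv ?_
  calc (f '' (G.neighborSet v ∩ S)).ncard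
      ≤ (G.neighborSet v ∩ S).ncard := Set.ncard_image_le
    _ < (G.neighborSet v).ncard :=
        Set.ncard_lt_ncard ⟨Set.inter_subset_left, fun h => hw (h hvw).2⟩
    _ ≤ Nat.card α := hdeg

theorem exists_insert_of_eq (hf : IsColoringOn G S f) {v x y : V}
    (hdeg : (G.neighborSet v).ncard ≤ Nat.card α) (hv : v ∉ S) (hvx : G.Adj v x)
    (hvy : G.Adj v y) (hxy : x ≠ y) (hfxy : f x = f y) :
    ∃ g : V → α, IsColoringOn G (insert v S) g ∧ S.EqOn g f := by
  refine hf.exists_insert hv ?_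
  have hsub : f '' (G.neighborSet v ∩ S) ⊆ f '' (G.neighborSet v \ {x}) := by
    rintro _ ⟨u, ⟨hu, -⟩, rfl⟩
    by_cases hux : u = x
    · exact ⟨y, ⟨hvy, hxy.symm⟩, by rw [hux, hfxy]⟩
    · exact ⟨u, ⟨hu, hux⟩, rfl⟩
  calc (f '' (G.neighborSet v ∩ S)).ncard
      ≤ (f '' (G.neighborSet v \ {x})).ncard := Set.ncard_le_ncard hsub
    _ ≤ (G.neighborSet v \ {x}).ncard := Set.ncard_image_le
    _ < (G.neighborSet v).ncard := Set.ncard_sdiff_singleton_lt_of_mem hvx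
    _ ≤ Nat.card α := hdeg

theorem exists_union_path (hdeg : ∀ v, (G.neighborSet v).ncard ≤ Nat.card α)
    (hf : IsColoringOn G S f) {l : List V} {w : V}
    (hchain : (l ++ [w]).IsChain G.Adj) (hnodup : (l ++ [w]).Nodup)
    (hS : ∀ v ∈ l ++ [w], v ∉ S) :
    ∃ g : V → α, IsColoringOn G (S ∪ {v | v ∈ l}) g ∧ S.EqOn g f := by
  induction l generalizing S f with
  | nil => exact ⟨f, by simpa using hf, fun _ _ => rfl⟩
  | cons v l ih =>
    -- `v` can be colored because its successor on the path is still uncolored.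
    obtain ⟨w', hvw', hw'⟩ : ∃ w', G.Adj v w' ∧ w' ∈ l ++ [w] := by
      cases l with
      | nil => exact ⟨w, by simpa using hchain, by simp⟩
      | cons a l => exact ⟨a, (List.isChain_cons_cons.1 hchain).1, by simp⟩
    obtain ⟨g, hg, hgf⟩ := hf.exists_insert_of_adj_notMem (hdeg v) (hS v (by simp)) hvw'
      (hS w' (by simp_all))
    obtain ⟨g', hg', hgg'⟩ := ih hg hchain.tail (List.nodup_cons.1 hnodup).2 (by grind)
    refine ⟨g', ?_, (hgg'.mono (Set.subset_insert v S)).trans hgf⟩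
    convert hg' using 1
    grind

theorem exists_union_path_of_eq (hdeg : ∀ v, (G.neighborSet v).ncard ≤ Nat.card α)
    (hf : IsColoringOn G S f) {l : List V} {w x y : V}
    (hchain : (l ++ [w]).IsChain G.Adj) (hnodup : (l ++ [w]).Nodup)
    (hS : ∀ v ∈ l ++ [w], v ∉ S) (hwx : G.Adj w x) (hwy : G.Adj w y) (hxy : x ≠ y)
    (hxS : x ∈ S) (hyS : y ∈ S) (hfxy : f x = f y) :
    ∃ g : V → α, IsColoringOn G (S ∪ {v | v ∈ l ++ [w]}) g := by
  obtain ⟨g, hg, hgf⟩ := hf.exists_union_path hdeg hchain hnodup hS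
  obtain ⟨g', hg', -⟩ := hg.exists_insert_of_eq (hdeg w) (by grind) hwx hwy hxy
    (by rw [hgf hxS, hgf hyS, hfxy])
  refine ⟨g', ?_⟩
  convert hg' using 1
  grind

theorem exists_union_cycle (hdeg : ∀ v, (G.neighborSet v).ncard ≤ Nat.card α)
    (hf : IsColoringOn G S f) {l₁ l₂ : List V} {x y u : V}
    (hchain : (l₁ ++ x :: y :: l₂).IsChain G.Adj) (hnodup : (l₁ ++ x :: y :: l₂).Nodup)
    (hclosed : ∀ a ∈ l₁.head?, ∀ b ∈ (y :: l₂).getLast?, G.Adj a b)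
    (hS : ∀ v ∈ l₁ ++ x :: y :: l₂, v ∉ S) (hx : ∀ v ∈ S, ¬ G.Adj x v) (hu : u ∈ S)
    (hyu : G.Adj y u) :
    ∃ g : V → α, IsColoringOn G (S ∪ {v | v ∈ l₁ ++ x :: y :: l₂}) g := by
  classical
  have hxS : x ∉ S := hS x (by simp)
  have hxy : G.Adj x y := (List.isChain_append_cons_cons.1 hchain).2.1
  have harc : (l₁.reverse ++ (y :: l₂).reverse).IsChain G.Adj :=
    (isChain_adj_reverse.2 hchain.left_of_append).append
      (isChain_adj_reverse.2 hchain.right_of_append.tail)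
      (by simpa [List.getLast?_cons] using hclosed)
  have hperm : (l₁ ++ x :: y :: l₂).Perm (x :: (l₁.reverse ++ (y :: l₂).reverse)) :=
    List.perm_middle.trans (.cons x (((List.reverse_perm _).append (List.reverse_perm _)).symm))
  rw [List.reverse_cons, ← List.append_assoc] at harc hperm
  obtain ⟨hxarc, harcnodup⟩ := List.nodup_cons.1 (hperm.nodup_iff.1 hnodup)
  obtain ⟨g, hg⟩ := (hf.update_insert (c := f u) hxS fun v hv h => absurd h (hx v hv))
    |>.exists_union_path_of_eq hdeg harc harcnodup
      (fun v hv => by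
        rintro (rfl | hvS)
        · exact hxarc hv
        · exact hS v (hperm.mem_iff.2 (List.mem_cons_of_mem x hv)) hvS)
      hxy.symm hyu (ne_of_mem_of_not_mem hu hxS).symm
      (Set.mem_insert x S) (Set.mem_insert_of_mem x hu)
      (by simp [ne_of_mem_of_not_mem hu hxS])
  refine ⟨g, ?_⟩
  convert hg using 1
  ext v
  simp only [Set.mem_union, Set.mem_insert_iff, Set.mem_ofPred_eq, hperm.mem_iff, List.mem_cons]
  tauto

theorem exists_of_spanning_path (hdeg : ∀ v, (G.neighborSet v).ncard ≤ Nat.card α) {l : List V}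
    {a b c d : V} (hchain : (l ++ [c, b, a]).IsChain G.Adj) (hnodup : (l ++ [c, b, a]).Nodup)
    (hac : ¬ G.Adj a c) (hd : d ∈ l) (hbd : G.Adj b d) :
    ∃ g : V → α, IsColoringOn G {v | v ∈ l ++ [c, b, a]} g := by
  obtain ⟨l₁, l₂, rfl⟩ := List.append_of_mem hd
  have hdegb : 0 < (G.neighborSet b).ncard := (Set.ncard_pos (Set.toFinite _)).2 ⟨d, hbd⟩
  have : Nonempty α := (Nat.card_pos_iff.1 (hdegb.trans_le (hdeg b))).1
  have hpair : IsColoringOn G {a, c} (fun _ => Classical.arbitrary α) := by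
    rintro u (rfl | rfl) v (rfl | rfl) huv
    · exact absurd rfl huv.ne
    · exact absurd huv hac
    · exact absurd huv.symm hac
    · exact absurd rfl huv.ne
  obtain ⟨hl₁, hl₂⟩ := List.isChain_split.1 hchain.left_of_append
  obtain ⟨-, hcb, hba⟩ := List.isChain_append_cons_cons.1 hchain
  have hl₁b : (l₁ ++ [d] ++ [b]).IsChain G.Adj :=
    hl₁.append (.singleton b) (by simpa using hbd.symm)
  have hl₂' : (l₂.reverse ++ [d]).IsChain G.Adj := by
    rwa [← List.reverse_cons, isChain_adj_reverse]
  have hnodup₁ : (l₁ ++ [d] ++ [b]).Nodup :=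
    hnodup.sublist (List.Sublist.append (by simp) (by simp))
  have hnodup₂ : (l₂.reverse ++ [d]).Nodup := by
    rw [← List.reverse_cons, List.nodup_reverse]
    grind
  obtain ⟨g, hg, hgac⟩ := hpair.exists_union_path hdeg hl₂' hnodup₂ (by grind)
  obtain ⟨g', hg'⟩ := hg.exists_union_path_of_eq hdeg (x := a) (y := c) hl₁b
    hnodup₁ (by grind) (by simpa using hba) hcb.symm (by grind) (by grind) (by grind)
    ((hgac (by simp)).trans (hgac (by simp)).symm)
  refine ⟨g', ?_⟩
  convert hg' using 1
  ext v
  simp only [Set.mem_union, Set.mem_insert_iff, Set.mem_ofPred_eq, Set.mem_singleton_iff,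
    List.mem_append, List.mem_cons, List.mem_reverse, List.not_mem_nil, or_false]
  tauto

end IsColoringOn

theorem exists_path_append_maximal [Finite V] {l₀ : List V} (hne : l₀ ≠ [])
    (hchain : l₀.IsChain G.Adj) (hnodup : l₀.Nodup) (hS : ∀ v ∈ S, G.neighborSet v ⊆ S)
    (hl₀ : ∀ v ∈ l₀, v ∈ S) :
    ∃ l x l', l ++ l₀ = x :: l' ∧ (l ++ l₀).IsChain G.Adj ∧ (l ++ l₀).Nodup ∧
      (∀ v ∈ l ++ l₀, v ∈ S) ∧ ∀ v, G.Adj x v → v ∈ l ++ l₀ := by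
  have := Fintype.ofFinite V
  induction hn : Fintype.card V - l₀.length generalizing l₀ with
  | zero =>
    obtain ⟨x, l', rfl⟩ := List.exists_cons_of_ne_nil hne
    refine ⟨[], x, l', rfl, hchain, hnodup, hl₀, fun v _ => ?_⟩
    by_contra hmem
    have := (List.nodup_cons.2 ⟨hmem, hnodup⟩).length_le_card
    grind
  | succ n ih =>
    obtain ⟨x, l', rfl⟩ := List.exists_cons_of_ne_nil hne
    by_cases hx : ∀ v, G.Adj x v → v ∈ x :: l'
    · exact ⟨[], x, l', rfl, hchain, hnodup, hl₀, hx⟩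
    push Not at hx
    obtain ⟨v, hxv, hv⟩ := hx
    obtain ⟨l, y, l'', hl⟩ := ih (l₀ := v :: x :: l') (by simp) (.cons_cons hxv.symm hchain)
      (List.nodup_cons.2 ⟨hv, hnodup⟩)
      (List.forall_mem_cons.2 ⟨hS x (hl₀ x (by simp)) hxv, hl₀⟩) (by grind)
    exact ⟨l ++ [v], y, l'', by simpa using hl⟩

theorem exists_not_adj_of_cliqueFree [Finite V] {n : ℕ} (hcl : G.CliqueFree (n + 1)) {v : V}
    (hv : n ≤ (G.neighborSet v).ncard) :
    ∃ a c, G.Adj v a ∧ G.Adj v c ∧ a ≠ c ∧ ¬ G.Adj a c := by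
  obtain ⟨t, ht, htn⟩ := Set.exists_subset_card_eq hv
  classical
  have hfin := Set.toFinite t
  by_contra! h
  refine hcl (insert v hfin.toFinset) ⟨?_, ?_⟩
  · rw [Finset.coe_insert, hfin.coe_toFinset, SimpleGraph.isClique_insert]
    exact ⟨fun a ha c hc => h a c (ht ha) (ht hc), fun a ha _ => ht ha⟩
  · rw [Finset.card_insert_of_notMem, ← Set.ncard_eq_toFinset_card t hfin, htn]
    simpa using fun hvt => (G.loopless.irrefl v) (ht hvt)

/-- `S` is minimal among the sets of vertices of `G` without a proper coloring with values
in `α`. -/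
def IsColorCritical (G : SimpleGraph V) (α : Type*) (S : Set V) : Prop :=
  Minimal (fun S => ¬ ∃ f : V → α, IsColoringOn G S f) S

namespace IsColorCritical

theorem exists_isColoringOn (hS : IsColorCritical G α S) (hT : T ⊂ S) :
    ∃ f : V → α, IsColoringOn G T f :=
  not_not.1 fun h => hT.not_subset (hS.le_of_le h hT.subset)

theorem exists_adj (hS : IsColorCritical G α S) (hT : T ⊂ S) (hne : T.Nonempty) :
    ∃ u ∈ T, ∃ v ∈ S \ T, G.Adj u v := by
  classical
  by_contra! h
  obtain ⟨f, hf⟩ := hS.exists_isColoringOn hT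
  obtain ⟨g, hg⟩ := hS.exists_isColoringOn (sdiff_lt hT.subset hne.ne_empty)
  exact hS.prop ⟨T.piecewise f g,
    by simpa [Set.union_sdiff_cancel hT.subset] using hf.piecewise_union hg h⟩

variable [Finite V] [Finite α]

theorem card_le_ncard_inter (hS : IsColorCritical G α S) {v : V} (hv : v ∈ S) :
    Nat.card α ≤ (G.neighborSet v ∩ S).ncard := by
  by_contra! hlt
  have hvS : v ∉ S \ {v} := by simp
  obtain ⟨f, hf⟩ := hS.exists_isColoringOn (Set.sdiff_singleton_ssubset.2 hv)
  obtain ⟨g, hg, -⟩ := hf.exists_insert hvS <|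
    ((Set.ncard_image_le).trans (Set.ncard_le_ncard (by grind))).trans_lt hlt
  exact hS.prop ⟨g, by rwa [Set.insert_sdiff_singleton, Set.insert_eq_of_mem hv] at hg⟩

theorem neighborSet_subset (hS : IsColorCritical G α S)
    (hdeg : ∀ v, (G.neighborSet v).ncard ≤ Nat.card α) {v : V} (hv : v ∈ S) :
    G.neighborSet v ⊆ S :=
  Set.inter_eq_left.1 <| Set.eq_of_subset_of_ncard_le Set.inter_subset_left
    ((hdeg v).trans (hS.card_le_ncard_inter hv))

theorem mem_of_cycle (hS : IsColorCritical G α S)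
    (hdeg : ∀ v, (G.neighborSet v).ncard ≤ Nat.card α) {x : V} {l : List V}
    (hchain : (x :: l).IsChain G.Adj) (hnodup : (x :: l).Nodup)
    (hclosed : ∀ y ∈ (x :: l).getLast?, G.Adj x y) (hlS : ∀ v ∈ x :: l, v ∈ S)
    (hx : ∀ v, G.Adj x v → v ∈ x :: l) {v : V} (hv : v ∈ S) : v ∈ x :: l := by
  by_contra hvl
  have hss : {v | v ∈ x :: l} ⊂ S := ⟨hlS, fun h => hvl (h hv)⟩
  obtain ⟨u, hul, w, hw, huw⟩ := hS.exists_adj hss ⟨x, by simp⟩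
  obtain ⟨l₁, a, b, l₂, hl, ha, w, hw, hbw⟩ :=
    exists_cons_eq_append_cons_cons (P := fun v => ∃ w ∈ S \ {v | v ∈ x :: l}, G.Adj v w)
      (fun ⟨w, hw, hxw⟩ => hw.2 (hx w hxw))
      ⟨u, (List.mem_cons.1 hul).resolve_left fun h => hw.2 (hx w (h ▸ huw)), w, hw, huw⟩
  obtain ⟨f, hf⟩ := hS.exists_isColoringOn
    (sdiff_lt hss.subset (Set.Nonempty.ne_empty ⟨x, List.mem_cons_self⟩))
  have hhead : ∀ y ∈ l₁.head?, ∀ z ∈ (b :: l₂).getLast?, G.Adj y z := by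
    rcases l₁ with _ | ⟨y, l₁⟩
    · simp
    · obtain ⟨rfl, rfl⟩ := List.cons_eq_cons.1 hl
      simpa [List.getLast?_cons] using hclosed
  obtain ⟨g, hg⟩ := hf.exists_union_cycle hdeg (hl ▸ hchain) (hl ▸ hnodup) hhead
    (fun v hv h => h.2 (hl ▸ hv)) (fun v hv hav => ha ⟨v, hv, hav⟩) hw hbw
  rw [← hl] at hg
  exact hS.prop ⟨g, by rwa [Set.sdiff_union_of_subset hss.subset] at hg⟩

theorem not_cliqueFree (hS : IsColorCritical G α S) (hα : 3 ≤ Nat.card α)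
    (hdeg : ∀ v, (G.neighborSet v).ncard ≤ Nat.card α) : ¬ G.CliqueFree (Nat.card α + 1) := by
  intro hcl
  have hnbr : ∀ v ∈ S, Nat.card α ≤ (G.neighborSet v).ncard := fun v hv =>
    (hS.card_le_ncard_inter hv).trans (Set.ncard_le_ncard Set.inter_subset_left)
  have hsub : ∀ v ∈ S, G.neighborSet v ⊆ S := fun v hv => hS.neighborSet_subset hdeg hv
  obtain ⟨b, hb⟩ : S.Nonempty := by
    by_contra! h
    obtain ⟨c⟩ : Nonempty α := (Nat.card_pos_iff.1 (by omega)).1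
    exact hS.prop ⟨fun _ => c, by simp [IsColoringOn, h]⟩
  obtain ⟨a, c, hba, hbc, hac, hnac⟩ := exists_not_adj_of_cliqueFree hcl (hnbr b hb)
  obtain ⟨l, x, l', hl, hchain, hnodup, hlS, hx⟩ :=
    exists_path_append_maximal (l₀ := [c, b, a]) (by simp) (by simp [hba, hbc.symm])
      (by simp [hac.symm, hba.ne, hbc.ne']) hsub (by simp [hb, hsub b hb hba, hsub b hb hbc])
  rw [hl] at hx
  obtain ⟨z, hxz⟩ : (G.neighborSet x).Nonempty :=
    Set.nonempty_of_ncard_ne_zero (by have := hnbr x (hlS x (by simp [hl])); omega)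
  obtain ⟨l₁, y, l₂, rfl, hxy, hl₂⟩ :=
    exists_eq_append_cons_of_last_pos (P := G.Adj x)
      ⟨z, (List.mem_cons.1 (hx z hxz)).resolve_left hxz.ne', hxz⟩
  have hpath : l ++ [c, b, a] = x :: (l₁ ++ [y]) ++ l₂ := by simp [hl]
  have hmem : ∀ v ∈ S, v ∈ l ++ [c, b, a] := fun v hv => by
    rw [hpath] at hchain hnodup hlS ⊢
    exact List.mem_append_left _ (hS.mem_of_cycle hdeg hchain.left_of_append
      hnodup.of_append_left (by simpa [List.getLast?_cons] using hxy) (by grind) (by grind) hv)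
  obtain ⟨d, hbd, hd⟩ : ∃ d ∈ G.neighborSet b, d ∉ ({a, c} : Set V) :=
    Set.exists_mem_notMem_of_ncard_lt_ncard (by
      have := hnbr b hb
      rw [Set.ncard_pair hac]
      omega)
  obtain ⟨g, hg⟩ := IsColoringOn.exists_of_spanning_path hdeg hchain hnodup hnac
    (d := d) (by have := hmem d (hsub b hb hbd); grind [hbd.ne']) hbd
  exact hS.prop ⟨g, fun u hu v hv => hg (hmem u hu) (hmem v hv)⟩

end IsColorCritical

theorem nonempty_coloring_of_cliqueFree [Finite V] [Finite α] (hα : 3 ≤ Nat.card α)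
    (hdeg : ∀ v, (G.neighborSet v).ncard ≤ Nat.card α) (hcl : G.CliqueFree (Nat.card α + 1)) :
    Nonempty (G.Coloring α) := by
  by_contra hcon
  obtain ⟨S, hS⟩ : ∃ S, IsColorCritical G α S := by
    refine exists_minimal_of_wellFoundedLT _ ⟨Set.univ, fun ⟨f, hf⟩ => ?_⟩
    exact hcon ⟨.mk f fun h => hf trivial trivial h⟩
  exact hS.not_cliqueFree hα hdeg hcl

end Brooks

/-! ### Threads and the thread graph -/

section Threads

variable {V : Type*} {G : SimpleGraph V}

theorem neighborSet_eq_pair {v a b : V} (hv : (G.neighborSet v).ncard = 2) (ha : G.Adj v a)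
    (hb : G.Adj v b) (hab : a ≠ b) : G.neighborSet v = {a, b} := by
  have hsub : {a, b} ⊆ G.neighborSet v := Set.pair_subset ha hb
  exact (Set.eq_of_subset_of_ncard_le hsub (by rw [hv, Set.ncard_pair hab])
    (Set.finite_of_ncard_ne_zero (by omega))).symm

theorem eq_univ_of_neighborSet_subset (hconn : G.Preconnected) {S : Set V} (hne : S.Nonempty)
    (hS : ∀ v ∈ S, G.neighborSet v ⊆ S) : S = Set.univ := by
  obtain ⟨s, hs⟩ := hne
  refine Set.eq_univ_of_forall fun v => by_contra fun hv => ?_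
  obtain ⟨w⟩ := hconn s v
  obtain ⟨d, -, hd, hd'⟩ := w.exists_boundary_dart S hs hv
  exact hd' (hS d.fst hd d.adj)

theorem neighborSet_subset_of_isNClique [Finite V] {n : ℕ} {s : Finset V}
    (hs : G.IsNClique (n + 1) s) {v : V} (hdeg : (G.neighborSet v).ncard ≤ n) (hv : v ∈ s) :
    G.neighborSet v ⊆ s := by
  have hsub : (s : Set V) \ {v} ⊆ G.neighborSet v := fun u hu =>
    hs.isClique hv hu.1 fun h => hu.2 h.symm
  have hcard : ((s : Set V) \ {v}).ncard = n := by
    rw [Set.ncard_sdiff_singleton_of_mem (Finset.mem_coe.2 hv), Set.ncard_coe_finset,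
      hs.card_eq, Nat.add_sub_cancel]
  rw [← Set.eq_of_subset_of_ncard_le hsub (hcard ▸ hdeg)]
  exact Set.sdiff_subset

/-- The vertices `p 0, …, p k` form a walk without backtracking in `G` whose two ends have
degree three and whose interior vertices have degree two. The ends may coincide; the values of
`p` beyond `k` are irrelevant. -/
structure IsThread (G : SimpleGraph V) (p : ℕ → V) (k : ℕ) : Prop where
  pos : 0 < k
  adj : ∀ i < k, G.Adj (p i) (p (i + 1))
  ne_two : ∀ i, i + 2 ≤ k → p i ≠ p (i + 2)
  interior : ∀ i, 0 < i → i < k → (G.neighborSet (p i)).ncard = 2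
  left : (G.neighborSet (p 0)).ncard = 3
  right : (G.neighborSet (p k)).ncard = 3

theorem injOn_of_interior_ncard_eq_two {p : ℕ → V} {k : ℕ}
    (hadj : ∀ i < k, G.Adj (p i) (p (i + 1))) (hne : ∀ i, i + 2 ≤ k → p i ≠ p (i + 2))
    (hint : ∀ i, 0 < i → i < k → (G.neighborSet (p i)).ncard = 2)
    (hleft : (G.neighborSet (p 0)).ncard = 3) : Set.InjOn p (Set.Iio k) := by
  suffices h : ∀ j < k, ∀ i < j, p i ≠ p j by
    intro i hi j hj hij
    rcases lt_trichotomy i j with hlt | heq | hgt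
    · exact absurd hij (h j hj i hlt)
    · exact heq
    · exact absurd hij.symm (h i hi j hgt)
  -- The first repetition would give a vertex of degree two a third neighbour.
  intro j
  induction j using Nat.strong_induction_on with
  | _ j ih =>
  intro hj i hi heq
  have hj2 := hint j (by omega) hj
  rcases i with _ | i
  · rw [← heq] at hj2
    omega
  obtain ⟨j, rfl⟩ : ∃ l, j = l + 1 := ⟨j - 1, by omega⟩
  have hback : G.Adj (p (i + 1)) (p j) := heq ▸ (hadj j (by omega)).symm
  have hnbr : p j ∈ ({p i, p (i + 2)} : Set V) :=
    neighborSet_eq_pair (hint (i + 1) (by omega) (by omega)) (hadj i (by omega)).symm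
      (hadj (i + 1) (by omega)) (hne i (by omega)) ▸ hback
  rcases hnbr with h | h
  · exact ih j (by omega) (by omega) i (by omega) h.symm
  · rcases lt_trichotomy (i + 2) j with h' | rfl | h'
    · exact ih j (by omega) (by omega) (i + 2) h' h.symm
    · exact hne (i + 1) (by omega) heq
    · obtain rfl : j = i + 1 := by omega
      exact hback.ne rfl

namespace IsThread

variable {p q : ℕ → V} {k l : ℕ}

theorem of_adj {u v : V} (hu : (G.neighborSet u).ncard = 3) (hv : (G.neighborSet v).ncard = 3)
    (huv : G.Adj u v) : IsThread G (fun i => if i = 0 then u else v) 1 where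
  pos := one_pos
  adj i hi := by simpa [Nat.lt_one_iff.1 hi] using huv
  ne_two i hi := by omega
  interior i h0 hi := by omega
  left := hu
  right := hv

theorem symm (hp : IsThread G p k) : IsThread G (fun i => p (k - i)) k where
  pos := hp.pos
  adj i hi := by
    have := (hp.adj (k - (i + 1)) (by omega)).symm
    rwa [show k - (i + 1) + 1 = k - i by omega] at this
  ne_two i hi := by
    have := (hp.ne_two (k - (i + 2)) (by omega)).symm
    rwa [show k - (i + 2) + 2 = k - i by omega] at this
  interior i h0 hi := hp.interior (k - i) (by omega) (by omega)
  left := hp.right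
  right := by simpa using hp.left

theorem neighborSet_succ (hp : IsThread G p k) {i : ℕ} (hi : i + 1 < k) :
    G.neighborSet (p (i + 1)) = {p i, p (i + 2)} :=
  neighborSet_eq_pair (hp.interior (i + 1) (by omega) hi) (hp.adj i (by omega)).symm
    (hp.adj (i + 1) hi) (hp.ne_two i (by omega))

theorem eq_or_eq_of_adj (hp : IsThread G p k) {i : ℕ} (hi : i + 1 < k) {z : V}
    (hz : G.Adj (p (i + 1)) z) : z = p i ∨ z = p (i + 2) := by
  rwa [← SimpleGraph.mem_neighborSet, hp.neighborSet_succ hi] at hz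

theorem injOn (hp : IsThread G p k) : Set.InjOn p (Set.Iio k) :=
  injOn_of_interior_ncard_eq_two hp.adj hp.ne_two hp.interior hp.left

theorem eq_zero_or_eq_of_ncard_eq_three (hp : IsThread G p k) {i : ℕ} (hi : i ≤ k)
    (h : (G.neighborSet (p i)).ncard = 3) : i = 0 ∨ i = k := by
  by_contra hcon
  have := hp.interior i (by omega) (by omega)
  omega

theorem hasAPath (hp : IsThread G p k) (hne : p 0 ≠ p k) : HasAPath G (k + 1) := by
  have hlast : ∀ i < k, p i ≠ p k := by
    intro i hi h
    rcases hp.eq_zero_or_eq_of_ncard_eq_three hi.le (h ▸ hp.right) with rfl | rfl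
    · exact hne h
    · exact hi.ne rfl
  refine ⟨p, fun a b ha hb hab => ?_, fun a ha => hp.adj a (by omega),
    fun a h0 ha => hp.interior a h0 (by omega), hp.left, hp.right⟩
  rcases Nat.lt_succ_iff_lt_or_eq.1 ha with ha | rfl <;>
    rcases Nat.lt_succ_iff_lt_or_eq.1 hb with hb | rfl
  · exact hp.injOn ha hb hab
  · exact absurd hab (hlast a ha)
  · exact absurd hab.symm (hlast b hb)
  · rfl

theorem eq_succ_of_eq (hp : IsThread G p k) (hq : IsThread G q l) (h0 : p 0 = q 0)
    (h1 : p 1 = q 1) {n : ℕ} (hk : n < k) (hl : n < l) :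
    p n = q n ∧ p (n + 1) = q (n + 1) := by
  induction n with
  | zero => exact ⟨h0, h1⟩
  | succ n ih =>
    obtain ⟨e0, e1⟩ := ih (by omega) (by omega)
    refine ⟨e1, (hq.eq_or_eq_of_adj hl (e1 ▸ hp.adj (n + 1) hk)).resolve_left fun h => ?_⟩
    exact hp.ne_two n hk (e0.trans h.symm)

theorem length_le (hp : IsThread G p k) (hq : IsThread G q l) (h0 : p 0 = q 0)
    (h1 : p 1 = q 1) : k ≤ l := by
  by_contra! hlk
  obtain ⟨n, rfl⟩ : ∃ n, l = n + 1 := ⟨l - 1, by have := hq.pos; omega⟩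
  have h2 := hp.interior (n + 1) n.succ_pos hlk
  rw [(hp.eq_succ_of_eq hq h0 h1 (by omega) n.lt_succ_self).2, hq.right] at h2
  omega

theorem end_eq (hp : IsThread G p k) (hq : IsThread G q l) (h0 : p 0 = q 0)
    (h1 : p 1 = q 1) : p k = q l := by
  obtain rfl : k = l :=
    le_antisymm (hp.length_le hq h0 h1) (hq.length_le hp h0.symm h1.symm)
  obtain ⟨n, rfl⟩ : ∃ n, k = n + 1 := ⟨k - 1, by have := hp.pos; omega⟩
  exact (hp.eq_succ_of_eq hq h0 h1 n.lt_succ_self n.lt_succ_self).2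

theorem eq_of_adj_of_one_lt (hp : IsThread G p k) (hk : 1 < k) {z : V} (hz : G.Adj (p 0) z)
    (h : G.Adj (p 1) z) : (k = 2 ∧ p k = z) ∨ (k = 3 ∧ p k = p 0) := by
  obtain rfl : z = p 2 := (hp.eq_or_eq_of_adj (i := 0) hk h).resolve_left hz.ne'
  rcases Nat.eq_or_lt_of_le hk with rfl | h2
  · exact .inl ⟨rfl, rfl⟩
  · have h3 : p 0 = p 3 := (hp.eq_or_eq_of_adj (i := 1) h2 hz.symm).resolve_left
      (hp.adj 0 (by omega)).ne
    obtain rfl : 3 = k := (hp.eq_zero_or_eq_of_ncard_eq_three h2 (h3 ▸ hp.left)).resolve_left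
      (by omega)
    exact .inr ⟨rfl, h3.symm⟩

theorem two_lt_length (hp : IsThread G p k) (h : p 0 = p k) : 2 < k := by
  by_contra! hk
  have := hp.pos
  interval_cases k
  · exact (hp.adj 0 one_pos).ne h
  · exact hp.ne_two 0 le_rfl h

theorem length_eq_three (hp : IsThread G p k) (hclaw : ClawFree G) (h : p 0 = p k) :
    k = 3 := by
  have hk := hp.two_lt_length h
  have hfirst : G.Adj (p 0) (p 1) := hp.adj 0 hp.pos
  have hlast : G.Adj (p 0) (p (k - 1)) := by simpa [h] using hp.symm.adj 0 hp.pos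
  have hne : p 1 ≠ p (k - 1) := hp.injOn.ne (by grind) (by grind) (by omega)
  obtain ⟨t, ht, htn⟩ : ∃ t ∈ G.neighborSet (p 0), t ∉ ({p 1, p (k - 1)} : Set V) :=
    Set.exists_mem_notMem_of_ncard_lt_ncard (by rw [Set.ncard_pair hne, hp.left]; omega)
  have hfirst_nbr : ∀ z, G.Adj (p 0) z → G.Adj (p 1) z → k = 3 := fun z hz h1 => by
    rcases hp.eq_of_adj_of_one_lt (by omega) hz h1 with e | e <;> omega
  have hlast_nbr : ∀ z, G.Adj (p 0) z → G.Adj (p (k - 1)) z → k = 3 := fun z hz h1 => by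
    rcases hp.symm.eq_of_adj_of_one_lt (z := z) (by omega) (by simpa [← h] using hz) h1
      with e | e <;> omega
  by_contra hcon
  exact hclaw ⟨p 0, p 1, p (k - 1), t, hne, by grind, by grind, hfirst, hlast, ht,
    mt (hfirst_nbr _ hlast) hcon, mt (hfirst_nbr _ ht) hcon, mt (hlast_nbr _ ht) hcon⟩

end IsThread

theorem exists_nonbacktracking_walk (hmin : ∀ v, 2 ≤ (G.neighborSet v).ncard) {s v : V}
    (hsv : G.Adj s v) :
    ∃ p : ℕ → V, p 0 = s ∧ p 1 = v ∧ ∀ n, G.Adj (p n) (p (n + 1)) ∧ p n ≠ p (n + 2) := by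
  have hother : ∀ a b : V, ∃ c, G.Adj b c ∧ c ≠ a := fun a b =>
    Set.exists_ne_of_one_lt_ncard (hmin b) a
  choose next hnext hback using hother
  let d : ℕ → V × V := fun n => (fun e : V × V => (e.2, next e.1 e.2))^[n] (s, v)
  have hd : ∀ n, d (n + 1) = ((d n).2, next (d n).1 (d n).2) :=
    fun n => Function.iterate_succ_apply' _ n _
  refine ⟨fun n => (d n).1, rfl, rfl, fun n => ⟨?_, ?_⟩⟩
  · cases n with
    | zero => exact hsv
    | succ n => simpa only [hd] using hnext _ _
  · simpa only [hd] using (hback _ _).symm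

theorem exists_isThread [Finite V]
    (hdeg : ∀ v, (G.neighborSet v).ncard = 2 ∨ (G.neighborSet v).ncard = 3) {s v : V}
    (hs : (G.neighborSet s).ncard = 3) (hsv : G.Adj s v) :
    ∃ p k, IsThread G p k ∧ p 0 = s ∧ p 1 = v := by
  classical
  obtain ⟨p, rfl, rfl, hp⟩ := exists_nonbacktracking_walk
    (fun v => by rcases hdeg v with h | h <;> omega) hsv
  have hex : ∃ k, 0 < k ∧ (G.neighborSet (p k)).ncard = 3 := by
    by_contra! hcon
    refine not_injective_infinite_finite p fun i j hij => ?_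
    exact injOn_of_interior_ncard_eq_two (k := max i j + 1) (fun n _ => (hp n).1)
      (fun n _ => (hp n).2) (fun n hn _ => (hdeg (p n)).resolve_right (hcon n hn)) hs
      (by grind) (by grind) hij
  exact ⟨p, Nat.find hex, ⟨(Nat.find_spec hex).1, fun n _ => (hp n).1, fun n _ => (hp n).2,
    fun n h0 hn => (hdeg (p n)).resolve_right fun h => Nat.find_min hex hn ⟨h0, h⟩, hs,
    (Nat.find_spec hex).2⟩, rfl, rfl⟩

end Threads

section ThreadGraph

variable {V : Type*} {G : SimpleGraph V}

/-- The graph on the vertices of `G` that joins two distinct vertices of degree three whenever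
they are the ends of a thread; all other vertices are isolated. -/
def threadGraph (G : SimpleGraph V) : SimpleGraph V where
  Adj u w := u ≠ w ∧ ∃ p k, IsThread G p k ∧ p 0 = u ∧ p k = w
  symm := ⟨by
    rintro u w ⟨hne, p, k, hp, rfl, rfl⟩
    exact ⟨hne.symm, _, k, hp.symm, by simp, by simp⟩⟩
  loopless := ⟨fun u h => h.1 rfl⟩

namespace threadGraph

theorem ncard_eq_three {u v : V} (h : (threadGraph G).Adj u v) :
    (G.neighborSet u).ncard = 3 := by
  obtain ⟨-, p, k, hp, rfl, -⟩ := h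
  exact hp.left

theorem adj_of_isThread {p : ℕ → V} {k : ℕ} (hp : IsThread G p k) (h : p 0 ≠ p k) :
    (threadGraph G).Adj (p 0) (p k) :=
  ⟨h, p, k, hp, rfl, rfl⟩

theorem adj_of_adj {u v : V} (hu : (G.neighborSet u).ncard = 3)
    (hv : (G.neighborSet v).ncard = 3) (huv : G.Adj u v) : (threadGraph G).Adj u v :=
  adj_of_isThread (.of_adj hu hv huv) huv.ne

theorem ncard_neighborSet_le [Finite V] (u : V) :
    ((threadGraph G).neighborSet u).ncard ≤ (G.neighborSet u).ncard := by
  choose! p k hp h0 hk using fun v (hv : (threadGraph G).Adj u v) => hv.2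
  refine Set.ncard_le_ncard_of_injOn (fun v => p v 1)
    (fun v hv => h0 v hv ▸ (hp v hv).adj 0 (hp v hv).pos) fun v hv w hw hvw => ?_
  rw [← hk v hv, ← hk w hw]
  exact (hp v hv).end_eq (hp w hw) ((h0 v hv).trans (h0 w hw).symm) hvw

variable [Finite V]

theorem mem_of_neighborSet_subset (hconn : G.Preconnected)
    (hdeg : ∀ v, (G.neighborSet v).ncard = 2 ∨ (G.neighborSet v).ncard = 3) {X : Set V}
    (hne : X.Nonempty) (hX3 : ∀ v ∈ X, (G.neighborSet v).ncard = 3)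
    (hX : ∀ u ∈ X, (threadGraph G).neighborSet u ⊆ X) {v : V}
    (hv : (G.neighborSet v).ncard = 3) : v ∈ X := by
  let Y : Set V := {v | ∃ p k, IsThread G p k ∧ p 0 ∈ X ∧ ∃ i ≤ k, p i = v}
  have hend : ∀ {p k}, IsThread G p k → p 0 ∈ X → p k ∈ X := fun {p k} hp h0 => by
    by_cases h : p 0 = p k
    · exact h ▸ h0
    · exact hX _ h0 (adj_of_isThread hp h)
  have hXY : ∀ u ∈ X, ∀ w, G.Adj u w → u ∈ Y ∧ w ∈ Y := fun u hu w huw => by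
    obtain ⟨p, k, hp, rfl, rfl⟩ := exists_isThread hdeg (hX3 u hu) huw
    exact ⟨⟨p, k, hp, hu, 0, k.zero_le, rfl⟩, p, k, hp, hu, 1, hp.pos, rfl⟩
  have hYne : Y.Nonempty := by
    obtain ⟨s, hs⟩ := hne
    obtain ⟨t, ht⟩ : (G.neighborSet s).Nonempty :=
      Set.nonempty_of_ncard_ne_zero (by rw [hX3 s hs]; omega)
    exact ⟨s, (hXY s hs t ht).1⟩
  have hY : ∀ u ∈ Y, G.neighborSet u ⊆ Y := by
    rintro _ ⟨p, k, hp, h0, i, hi, rfl⟩ w hw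
    rcases i with _ | i
    · exact (hXY _ h0 w hw).2
    rcases hi.eq_or_lt with rfl | hi
    · exact (hXY _ (hend hp h0) w hw).2
    rcases hp.eq_or_eq_of_adj hi hw with rfl | rfl
    · exact ⟨p, k, hp, h0, i, by omega, rfl⟩
    · exact ⟨p, k, hp, h0, i + 2, hi, rfl⟩
  obtain ⟨p, k, hp, h0, i, hi, rfl⟩ : v ∈ Y :=
    eq_univ_of_neighborSet_subset hconn hYne hY ▸ Set.mem_univ v
  rcases hp.eq_zero_or_eq_of_ncard_eq_three hi hv with rfl | rfl
  · exact h0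
  · exact hend hp h0

theorem cliqueFree_four (hconn : G.Preconnected)
    (hdeg : ∀ v, (G.neighborSet v).ncard = 2 ∨ (G.neighborSet v).ncard = 3)
    (hfour : {v : V | (G.neighborSet v).ncard = 3}.ncard ≠ 4) :
    (threadGraph G).CliqueFree 4 := by
  intro s hs
  have hne : s.Nonempty := Finset.card_pos.1 (by rw [hs.card_eq]; omega)
  have hs3 : ∀ v ∈ s, (G.neighborSet v).ncard = 3 := fun v hv => by
    obtain ⟨w, hw, hwv⟩ := s.exists_mem_ne (by rw [hs.card_eq]; omega) v
    exact ncard_eq_three (hs.isClique hv hw hwv.symm)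
  have hclosed : ∀ v ∈ s, (threadGraph G).neighborSet v ⊆ s := fun v hv =>
    neighborSet_subset_of_isNClique hs ((ncard_neighborSet_le v).trans (hs3 v hv).le) hv
  have heq : {v : V | (G.neighborSet v).ncard = 3} = s :=
    Set.Subset.antisymm (fun v hv => mem_of_neighborSet_subset hconn hdeg hne hs3 hclosed hv) hs3
  exact hfour (by rw [heq, Set.ncard_coe_finset, hs.card_eq])

end threadGraph

end ThreadGraph

/-! ### Partial dynamic colorings -/

section PartialDynamicColoring

variable {V : Type*} {G : SimpleGraph V} {S : Set V} {f : V → Fin 3} {p : ℕ → V} {k : ℕ}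

theorem exists_three_coloring_of_path (k : ℕ) {x y : Fin 3} (hxy : 3 ∣ k ↔ x = y) :
    ∃ q : ℕ → Fin 3, q 0 = x ∧ q k = y ∧ ∀ i, q i ≠ q (i + 1) ∧ q i ≠ q (i + 2) := by
  have hperm : ∀ r x y : Fin 3, (r = 0 ↔ x = y) → ∃ σ : Equiv.Perm (Fin 3), σ 0 = x ∧ σ r = y := by
    decide
  obtain ⟨σ, hσ0, hσk⟩ := hperm (Fin.ofNat 3 k) x y
    (by rw [← hxy, Nat.dvd_iff_mod_eq_zero, Fin.ext_iff]; rfl)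
  refine ⟨fun i => σ (Fin.ofNat 3 i), hσ0, hσk, fun i => ⟨σ.injective.ne ?_, σ.injective.ne ?_⟩⟩
  all_goals
    simp only [ne_eq, Fin.ext_iff, Fin.ofNat_eq_cast, Fin.val_natCast]
    omega

theorem exists_eqOn_of_injOn {ι α β : Type*} [Nonempty ι] {p : ι → α} {I : Set ι}
    (hp : I.InjOn p) (q : ι → β) (f : α → β) :
    ∃ g : α → β, I.EqOn (g ∘ p) q ∧ (p '' I)ᶜ.EqOn g f := by
  classical
  refine ⟨(p '' I).piecewise (q ∘ Function.invFunOn p I) f, fun i hi => ?_,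
    Set.piecewise_eqOn_compl _ _ _⟩
  simp [Set.mem_image_of_mem p hi, hp.leftInvOn_invFunOn hi]

theorem IsThread.three_dvd_length_iff (hp : IsThread G p k) (hclaw : ClawFree G)
    (hA : ∀ j : ℕ, 0 < j → ¬ HasAPath G (3 * j + 1)) : 3 ∣ k ↔ p 0 = p k := by
  refine ⟨fun ⟨j, hj⟩ => ?_, fun h => by rw [hp.length_eq_three hclaw h]⟩
  by_contra hne
  have := hp.pos
  exact hA j (by omega) (hj ▸ hp.hasAPath hne)

/-- `f` is a coloring of `S` that does not obstruct a dynamic coloring of `G`: closed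
neighbourhoods of vertices of `S` of degree two lie in `S` and are rainbow, and ends of a thread
get different colors. The values of `f` outside `S` are irrelevant, and `S` contains all vertices
of degree three. -/
structure IsPartialDynamicColoring (G : SimpleGraph V) (S : Set V) (f : V → Fin 3) : Prop where
  mem : ∀ v, (G.neighborSet v).ncard = 3 → v ∈ S
  closed : ∀ v ∈ S, (G.neighborSet v).ncard = 2 → G.neighborSet v ⊆ S
  injOn : ∀ v ∈ S, (G.neighborSet v).ncard = 2 → (insert v (G.neighborSet v)).InjOn f
  thread : ∀ ⦃u v⦄, (threadGraph G).Adj u v → f u ≠ f v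

namespace IsPartialDynamicColoring

theorem of_coloring (c : (threadGraph G).Coloring (Fin 3)) :
    IsPartialDynamicColoring G {v | (G.neighborSet v).ncard = 3} c where
  mem _ hv := hv
  closed v hv3 hv2 := absurd (hv2.symm.trans hv3) (by omega)
  injOn v hv3 hv2 := absurd (hv2.symm.trans hv3) (by omega)
  thread _ _ h := c.valid h

theorem notMem_of_isThread (hf : IsPartialDynamicColoring G S f) (hp : IsThread G p k)
    (h1 : p 1 ∉ S) {i : ℕ} (hi : i + 1 < k) : p (i + 1) ∉ S := by
  induction i with
  | zero => exact h1
  | succ i ih =>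
    intro hmem
    exact ih (by omega) (hf.closed _ hmem (hp.interior _ i.succ.succ_pos hi)
      (hp.adj (i + 1) (by omega)).symm)

theorem exists_coloring_of_isThread (hf : IsPartialDynamicColoring G S f) (hclaw : ClawFree G)
    (hA : ∀ j : ℕ, 0 < j → ¬ HasAPath G (3 * j + 1)) (hp : IsThread G p k) :
    ∃ q : ℕ → Fin 3, q 0 = f (p 0) ∧ q k = f (p k) ∧ ∀ i, q i ≠ q (i + 1) ∧ q i ≠ q (i + 2) := by
  refine exists_three_coloring_of_path k ((hp.three_dvd_length_iff hclaw hA).trans ?_)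
  refine ⟨congrArg f, fun h => by_contra fun hne => ?_⟩
  exact hf.thread (threadGraph.adj_of_isThread hp hne) h

theorem mem_union_of_isThread (hf : IsPartialDynamicColoring G S f) (hp : IsThread G p k) {i : ℕ}
    (hi : i ≤ k) : p i ∈ S ∪ p '' Set.Ioo 0 k := by
  rcases i.eq_zero_or_pos with rfl | h0
  · exact .inl (hf.mem _ hp.left)
  rcases hi.eq_or_lt with rfl | hi
  · exact .inl (hf.mem _ hp.right)
  · exact .inr ⟨i, ⟨h0, hi⟩, rfl⟩

theorem union_of_isThread (hf : IsPartialDynamicColoring G S f) (hp : IsThread G p k)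
    {g : V → Fin 3} (hgf : S.EqOn g f) (hg : ∀ i, i + 1 < k →
      g (p i) ≠ g (p (i + 1)) ∧ g (p i) ≠ g (p (i + 2)) ∧ g (p (i + 1)) ≠ g (p (i + 2))) :
    IsPartialDynamicColoring G (S ∪ p '' Set.Ioo 0 k) g where
  mem v hv := .inl (hf.mem v hv)
  closed := by
    rintro v (hv | ⟨i, ⟨h0, hi⟩, rfl⟩) hv2
    · exact (hf.closed v hv hv2).trans Set.subset_union_left
    · obtain ⟨i, rfl⟩ := Nat.exists_eq_add_one_of_ne_zero h0.ne'
      rw [hp.neighborSet_succ hi]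
      exact Set.pair_subset (hf.mem_union_of_isThread hp (by omega))
        (hf.mem_union_of_isThread hp hi)
  injOn := by
    rintro v (hv | ⟨i, ⟨h0, hi⟩, rfl⟩) hv2
    · exact (hf.injOn v hv hv2).congr
        (hgf.symm.mono (Set.insert_subset hv (hf.closed v hv hv2)))
    · obtain ⟨i, rfl⟩ := Nat.exists_eq_add_one_of_ne_zero h0.ne'
      have := hg i hi
      rw [hp.neighborSet_succ hi]
      grind [Set.InjOn]
  thread u v huv := by
    rw [hgf (hf.mem u (threadGraph.ncard_eq_three huv)),
      hgf (hf.mem v (threadGraph.ncard_eq_three huv.symm))]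
    exact hf.thread huv

theorem exists_extension (hf : IsPartialDynamicColoring G S f) (hclaw : ClawFree G)
    (hA : ∀ j : ℕ, 0 < j → ¬ HasAPath G (3 * j + 1)) (hp : IsThread G p k) (h1 : p 1 ∉ S) :
    ∃ T g, IsPartialDynamicColoring G T g ∧ S ⊂ T := by
  obtain ⟨q, hq0, hqk, hq⟩ := hf.exists_coloring_of_isThread hclaw hA hp
  obtain ⟨g, hgq, hgf⟩ := exists_eqOn_of_injOn
    (hp.injOn.mono (Set.Ioo_subset_Iio_self (a := 0))) q f
  have hS : S ⊆ (p '' Set.Ioo 0 k)ᶜ := by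
    rintro _ hS ⟨i, ⟨h0, hi⟩, rfl⟩
    obtain ⟨i, rfl⟩ : ∃ j, i = j + 1 := ⟨i - 1, by omega⟩
    exact hf.notMem_of_isThread hp h1 hi hS
  have hgS : S.EqOn g f := hgf.mono hS
  have hgp : ∀ i ≤ k, g (p i) = q i := fun i hi => by
    rcases i.eq_zero_or_pos with rfl | h0
    · rw [hgS (hf.mem _ hp.left), hq0]
    · rcases hi.eq_or_lt with rfl | hi
      · rw [hgS (hf.mem _ hp.right), hqk]
      · exact hgq ⟨h0, hi⟩
  have h1k : 1 < k := Nat.lt_of_le_of_ne hp.pos fun h => h1 (hf.mem _ (h ▸ hp.right))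
  refine ⟨_, g, hf.union_of_isThread hp hgS fun i hi => ?_, Set.subset_union_left,
    fun h => h1 (h (.inr ⟨1, ⟨one_pos, h1k⟩, rfl⟩))⟩
  rw [hgp i (by omega), hgp (i + 1) hi.le, hgp (i + 2) hi]
  exact ⟨(hq i).1, (hq i).2, (hq (i + 1)).1⟩

theorem exists_univ [Finite V] (hf : IsPartialDynamicColoring G S f) (hconn : G.Preconnected)
    (hclaw : ClawFree G) (hdeg : ∀ v, (G.neighborSet v).ncard = 2 ∨ (G.neighborSet v).ncard = 3)
    (hA : ∀ j : ℕ, 0 < j → ¬ HasAPath G (3 * j + 1)) (hne : S.Nonempty) :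
    ∃ g, IsPartialDynamicColoring G Set.univ g := by
  obtain ⟨T, hST, hT⟩ : ∃ T ⊇ S, Maximal (fun T => ∃ g, IsPartialDynamicColoring G T g) T :=
    (Set.toFinite _).exists_le_maximal ⟨f, hf⟩
  obtain ⟨g, hg⟩ := hT.prop
  suffices T = Set.univ from ⟨g, this ▸ hg⟩
  refine eq_univ_of_neighborSet_subset hconn (hne.mono hST) fun v hv w hvw => ?_
  rcases hdeg v with hv2 | hv3
  · exact hg.closed v hv hv2 hvw
  · by_contra hw
    obtain ⟨p, k, hp, rfl, rfl⟩ := exists_isThread hdeg hv3 hvw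
    obtain ⟨T', g', hg', hTT'⟩ := hg.exists_extension hclaw hA hp hw
    exact hTT'.not_subset (hT.le_of_ge ⟨g', hg'⟩ hTT'.subset)

theorem ne_of_adj (hf : IsPartialDynamicColoring G Set.univ f)
    (hdeg : ∀ v, (G.neighborSet v).ncard = 2 ∨ (G.neighborSet v).ncard = 3) {u v : V}
    (huv : G.Adj u v) : f u ≠ f v := by
  have hne : ∀ {x y}, (G.neighborSet x).ncard = 2 → G.Adj x y → f x ≠ f y := fun hx hxy =>
    (hf.injOn _ trivial hx).ne (Set.mem_insert _ _) (Set.mem_insert_of_mem _ hxy) hxy.ne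
  rcases hdeg u with hu | hu
  · exact hne hu huv
  rcases hdeg v with hv | hv
  · exact (hne hv huv.symm).symm
  · exact hf.thread (threadGraph.adj_of_adj hu hv huv)

theorem isDynamicColoring (hf : IsPartialDynamicColoring G Set.univ f) (hclaw : ClawFree G)
    (hdeg : ∀ v, (G.neighborSet v).ncard = 2 ∨ (G.neighborSet v).ncard = 3) :
    IsDynamicColoring G 3 f := by
  refine ⟨fun u v huv => hf.ne_of_adj hdeg huv, fun v _ => ?_⟩
  rcases hdeg v with h | h
  · obtain ⟨a, b, hab, hN⟩ := Set.ncard_eq_two.1 h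
    have ha : a ∈ G.neighborSet v := by simp [hN]
    have hb : b ∈ G.neighborSet v := by simp [hN]
    exact ⟨a, b, ha, hb, (hf.injOn v trivial h).ne (.inr ha) (.inr hb) hab⟩
  · obtain ⟨a, b, c, hab, hac, hbc, hN⟩ := Set.ncard_eq_three.1 h
    have ha : a ∈ G.neighborSet v := by simp [hN]
    have hb : b ∈ G.neighborSet v := by simp [hN]
    have hc : c ∈ G.neighborSet v := by simp [hN]
    by_contra! hmono
    have hindep : ∀ x ∈ G.neighborSet v, ∀ y ∈ G.neighborSet v, ¬ G.Adj x y :=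
      fun x hx y hy hxy => hf.ne_of_adj hdeg hxy (hmono x y hx hy)
    exact hclaw ⟨v, a, b, c, hab, hac, hbc, ha, hb, hc, hindep a ha b hb, hindep a ha c hc,
      hindep b hb c hc⟩

end IsPartialDynamicColoring

end PartialDynamicColoring

/-- A connected claw-free graph with `Δ(G) = 3`, minimum degree at least 2, containing
no `A_{3j+1}` (`j ≥ 1`), in which the number of vertices of degree 3 is not 4,
has a dynamic 3-coloring. -/
theorem dynamic_three_colorable_of_degree_three_count_ne_four {V : Type*} [Fintype V]
    (G : SimpleGraph V) (hconn : G.Connected) (hclaw : ClawFree G)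
    (hmax : ∀ v : V, (G.neighborSet v).ncard ≤ 3)
    (hmax' : ∃ v : V, (G.neighborSet v).ncard = 3)
    (hmin : ∀ v : V, 2 ≤ (G.neighborSet v).ncard)
    (hA : ∀ j : ℕ, 0 < j → ¬ HasAPath G (3 * j + 1))
    (hfour : {v : V | (G.neighborSet v).ncard = 3}.ncard ≠ 4) :
    ∃ c : V → Fin 3, IsDynamicColoring G 3 c := by
  have hdeg : ∀ v : V, (G.neighborSet v).ncard = 2 ∨ (G.neighborSet v).ncard = 3 := fun v => by
    have := hmax v
    have := hmin v
    omega
  have hdeg_thread : ∀ v : V, ((threadGraph G).neighborSet v).ncard ≤ 3 := fun v =>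
    (threadGraph.ncard_neighborSet_le v).trans (hmax v)
  obtain ⟨c⟩ : Nonempty ((threadGraph G).Coloring (Fin 3)) :=
    nonempty_coloring_of_cliqueFree (by simp) (by simpa using hdeg_thread)
      (by simpa using threadGraph.cliqueFree_four hconn.preconnected hdeg hfour)
  obtain ⟨f, hf⟩ := (IsPartialDynamicColoring.of_coloring c).exists_univ hconn.preconnected
    hclaw hdeg hA hmax'
  exact ⟨f, hf.isDynamicColoring hclaw hdeg⟩
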